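/- For the q-expansion coefficients: let a(n) count partitions of n into parts ≡ ±2 (mod 5). Then a(n) also equals the number of partitions of n into parts with difference at least 2 between consecutive parts and smallest part at least 2 (the second Rogers–Ramanujan identity): ∏_{n≥0} 1/((1-q^{5n+2})(1-q^{5n+3})) = ∑_{n≥0} q^{n²+n}/((1-q)(1-q²)⋯(1-q^n)). -/

import Mathlib

open scoped BigOperators

/-!
Pascal's rule for `q`-binomial coefficients yields three finite identities: the limiting
`q`-Vandermonde sum, which is the content of Bailey's lemma, the unit Bailey pair, and the finite
form of Jacobi's triple product. One application of Bailey's lemma to the unit pair relative to `a`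
makes `β n = 1 / (q; q)ₙ`; a second one, followed by `N → ∞`, is Rogers' identity
`(aq; q)_∞ ∑ aⁿ q^(n²) / (q; q)ₙ = ∑ a²ⁿ q^(2n²) αₙ`, where `α` is the unit pair. For `a = q` the
right side is, up to the factor `1 - q`, the bilateral theta series `∑ (-q⁴)ᵏ q^(5k(k-1)/2)`, which
the triple product in base `q⁵` turns into `(q; q⁵)_∞ (q⁴; q⁵)_∞ (q⁵; q⁵)_∞`. Dividing by
`(q; q)_∞ = ∏_{r=1}^5 (qʳ; q⁵)_∞` leaves the residue classes `2` and `3` modulo `5`.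
-/

open Finset Filter Topology

section Finite

variable {K : Type*} [Field K]

/-- The `q`-shifted factorial `(a; q)ₙ = (1 - a)(1 - aq)⋯(1 - aqⁿ⁻¹)`. -/
def qPochhammer (a q : K) (n : ℕ) : K :=
  ∏ i ∈ range n, (1 - a * q ^ i)

variable {a q z : K}

@[simp]
lemma qPochhammer_zero (a q : K) : qPochhammer a q 0 = 1 := prod_range_zero _

lemma qPochhammer_succ (a q : K) (n : ℕ) :
    qPochhammer a q (n + 1) = qPochhammer a q n * (1 - a * q ^ n) := prod_range_succ _ _

lemma qPochhammer_add (a q : K) (m n : ℕ) :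
    qPochhammer a q (m + n) = qPochhammer a q m * qPochhammer (a * q ^ m) q n := by
  simp only [qPochhammer, prod_range_add, pow_add, mul_assoc]

lemma qPochhammer_succ' (a q : K) (n : ℕ) :
    qPochhammer a q (n + 1) = (1 - a) * qPochhammer (a * q) q n := by
  rw [add_comm, qPochhammer_add, qPochhammer_succ]
  simp

lemma qPochhammer_mul (a q : K) (d n : ℕ) :
    qPochhammer a q (d * n) = ∏ r ∈ range d, qPochhammer (a * q ^ r) (q ^ d) n := by
  induction n with
  | zero => simp
  | succ n ih =>
    simp only [Nat.mul_succ, qPochhammer_succ _ _ n, qPochhammer_add a, prod_mul_distrib, ih]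
    congr 1
    exact prod_congr rfl fun r _ => by ring

lemma one_sub_mul_pow_ne_zero (ha : ∀ n, qPochhammer a q n ≠ 0) (n : ℕ) : 1 - a * q ^ n ≠ 0 :=
  right_ne_zero_of_mul (qPochhammer_succ a q n ▸ ha (n + 1))

lemma one_sub_pow_succ_ne_zero (hq : ∀ n, qPochhammer q q n ≠ 0) (n : ℕ) :
    1 - q ^ (n + 1) ≠ 0 :=
  pow_succ' q n ▸ one_sub_mul_pow_ne_zero hq n

lemma qPochhammer_mul_pow_ne_zero (ha : ∀ n, qPochhammer a q n ≠ 0) (m n : ℕ) :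
    qPochhammer (a * q ^ m) q n ≠ 0 :=
  right_ne_zero_of_mul (qPochhammer_add a q m n ▸ ha (m + n))

/-- Pascal's rule for `q`-binomial coefficients, in summed form: the two coefficients on the left
come from splitting `1 - q ^ (n + 1)`. -/
lemma sum_antidiagonal_succ_div_qPochhammer (hq : ∀ n, qPochhammer q q n ≠ 0)
    (F G : ℕ → ℕ → K) (n : ℕ) :
    ∑ p ∈ antidiagonal (n + 1), ((1 - q ^ p.2) * F p.1 p.2 + (1 - q ^ p.1) * G p.1 p.2) /
        (qPochhammer q q p.1 * qPochhammer q q p.2) =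
      ∑ p ∈ antidiagonal n, (F p.1 (p.2 + 1) + G (p.1 + 1) p.2) /
        (qPochhammer q q p.1 * qPochhammer q q p.2) := by
  have hcancel (m : ℕ) (x : K) :
      (1 - q ^ (m + 1)) * x / qPochhammer q q (m + 1) = x / qPochhammer q q m := by
    rw [qPochhammer_succ, ← pow_succ', mul_comm (qPochhammer q q m),
      mul_div_mul_left _ _ (one_sub_pow_succ_ne_zero hq m)]
  simp only [add_div, sum_add_distrib]
  rw [Nat.sum_antidiagonal_succ', Nat.sum_antidiagonal_succ]
  simp only [pow_zero, sub_self, zero_mul, zero_div, zero_add]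
  congr 1 <;> refine sum_congr rfl fun p _ => ?_
  · simp only [mul_comm (qPochhammer q q p.1), ← div_div, hcancel]
  · simp only [← div_div, hcancel]

lemma one_sub_pow_mul_sum_antidiagonal_succ (hq : ∀ n, qPochhammer q q n ≠ 0)
    (F : ℕ → ℕ → K) (n : ℕ) :
    (1 - q ^ (n + 1)) * ∑ p ∈ antidiagonal (n + 1), F p.1 p.2 /
        (qPochhammer q q p.1 * qPochhammer q q p.2) =
      ∑ p ∈ antidiagonal n, (F p.1 (p.2 + 1) + q ^ p.2 * F (p.1 + 1) p.2) /
        (qPochhammer q q p.1 * qPochhammer q q p.2) := by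
  rw [← sum_antidiagonal_succ_div_qPochhammer hq F fun i j => q ^ j * F i j, mul_sum]
  refine sum_congr rfl fun p hp => ?_
  rw [← mem_antidiagonal.1 hp]
  ring

/-- The limiting case `b → ∞` of the `q`-Chu–Vandermonde sum. -/
lemma sum_antidiagonal_pow_mul_pow_sq (hq : ∀ n, qPochhammer q q n ≠ 0)
    (ha : ∀ n, qPochhammer (a * q) q n ≠ 0) (n : ℕ) :
    ∑ p ∈ antidiagonal n, a ^ p.1 * q ^ p.1 ^ 2 / qPochhammer (a * q) q p.1 /
        (qPochhammer q q p.1 * qPochhammer q q p.2) =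
      1 / (qPochhammer q q n * qPochhammer (a * q) q n) := by
  induction n generalizing a with
  | zero => simp
  | succ n ih =>
    have haq (m : ℕ) : qPochhammer (a * q * q) q m ≠ 0 := by
      simpa using qPochhammer_mul_pow_ne_zero ha 1 m
    have haq1 : 1 - a * q ≠ 0 := by simpa using one_sub_mul_pow_ne_zero ha 0
    apply mul_left_cancel₀ (one_sub_pow_succ_ne_zero hq n)
    calc
      _ = ∑ p ∈ antidiagonal n, (a ^ p.1 * q ^ p.1 ^ 2 / qPochhammer (a * q) q p.1 /
            (qPochhammer q q p.1 * qPochhammer q q p.2) +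
          a * q ^ (n + 1) / (1 - a * q) *
            ((a * q) ^ p.1 * q ^ p.1 ^ 2 / qPochhammer (a * q * q) q p.1 /
              (qPochhammer q q p.1 * qPochhammer q q p.2))) := by
        rw [one_sub_pow_mul_sum_antidiagonal_succ hq
          (fun i _ => a ^ i * q ^ i ^ 2 / qPochhammer (a * q) q i)]
        refine sum_congr rfl fun p hp => ?_
        have := haq p.1
        rw [← mem_antidiagonal.1 hp, qPochhammer_succ' (a * q)]
        field_simp
        ring
      _ = 1 / (qPochhammer q q n * qPochhammer (a * q) q n) + a * q ^ (n + 1) / (1 - a * q) *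
            (1 / (qPochhammer q q n * qPochhammer (a * q * q) q n)) := by
        rw [sum_add_distrib, ← mul_sum, ih ha, ih haq]
      _ = (1 - q ^ (n + 1)) * (1 / (qPochhammer q q (n + 1) * qPochhammer (a * q) q (n + 1))) := by
        have hshift := (qPochhammer_succ (a * q) q n).symm.trans (qPochhammer_succ' (a * q) q n)
        have hqn := hq n
        have hqn1 := one_sub_pow_succ_ne_zero hq n
        have han := ha n
        have haqn := haq n
        have haqn1 := one_sub_mul_pow_ne_zero ha n
        rw [qPochhammer_succ q, ← pow_succ', qPochhammer_succ]
        generalize qPochhammer (a * q * q) q n = B at *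
        field_simp
        linear_combination a * q * q ^ n * hshift

/-- `(α, β)` is a Bailey pair relative to `a`, that is,
`βₙ = ∑_{r ≤ n} α_r / ((q; q)_{n - r} (aq; q)_{n + r})`; the sum runs over the pairs
`(r, n - r)`. -/
def IsBaileyPair (a q : K) (α β : ℕ → K) : Prop :=
  ∀ n, β n = ∑ p ∈ antidiagonal n,
    α p.1 / (qPochhammer q q p.2 * qPochhammer (a * q) q (n + p.1))

lemma sum_antidiagonal_antidiagonal_assoc {M : Type*} [AddCommMonoid M] (f : ℕ → ℕ → ℕ → M)
    (n : ℕ) :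
    ∑ p ∈ antidiagonal n, ∑ r ∈ antidiagonal p.1, f r.1 r.2 p.2 =
      ∑ p ∈ antidiagonal n, ∑ r ∈ antidiagonal p.2, f p.1 r.1 r.2 := by
  simp only [sum_sigma']
  apply sum_nbij' (fun ⟨⟨_, k⟩, ⟨i, j⟩⟩ => ⟨(i, j + k), (j, k)⟩)
    (fun ⟨⟨i, _⟩, ⟨j, k⟩⟩ => ⟨(i + j, k), (i, j)⟩) <;>
  · simp only [Sigma.forall, Prod.forall, mem_sigma, HasAntidiagonal.mem_antidiagonal]
    grind

/-- **Bailey's lemma**, with both of its free parameters sent to infinity. -/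
theorem IsBaileyPair.bailey_lemma {α β : ℕ → K} (h : IsBaileyPair a q α β)
    (hq : ∀ n, qPochhammer q q n ≠ 0) (ha : ∀ n, qPochhammer (a * q) q n ≠ 0) :
    IsBaileyPair a q (fun n => a ^ n * q ^ n ^ 2 * α n) fun n =>
      ∑ p ∈ antidiagonal n, a ^ p.1 * q ^ p.1 ^ 2 * β p.1 / qPochhammer q q p.2 := by
  intro n
  simp only [h _, mul_sum, sum_div]
  calc
    _ = ∑ p ∈ antidiagonal n, ∑ r ∈ antidiagonal p.1, a ^ (r.1 + r.2) * q ^ (r.1 + r.2) ^ 2 *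
          (α r.1 / (qPochhammer q q r.2 * qPochhammer (a * q) q (r.1 + r.2 + r.1))) /
          qPochhammer q q p.2 :=
      sum_congr rfl fun p _ => sum_congr rfl fun r hr => by rw [mem_antidiagonal.1 hr]
    _ = _ := sum_antidiagonal_antidiagonal_assoc (fun i j k => a ^ (i + j) * q ^ (i + j) ^ 2 *
          (α i / (qPochhammer q q j * qPochhammer (a * q) q (i + j + i))) / qPochhammer q q k) n
    _ = _ := sum_congr rfl fun p hp => ?_
  have hshift (j : ℕ) : qPochhammer (a * q) q (p.1 + j + p.1) =
      qPochhammer (a * q) q (2 * p.1) * qPochhammer (a * q ^ (2 * p.1) * q) q j := by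
    rw [show p.1 + j + p.1 = 2 * p.1 + j by ring, qPochhammer_add, mul_right_comm a]
  have hsum := sum_antidiagonal_pow_mul_pow_sq (a := a * q ^ (2 * p.1)) hq
    (fun m => by
      rw [mul_right_comm]
      exact qPochhammer_mul_pow_ne_zero ha _ m) p.2
  simp only [← mem_antidiagonal.1 hp, hshift]
  calc
    _ = a ^ p.1 * q ^ p.1 ^ 2 * α p.1 / qPochhammer (a * q) q (2 * p.1) *
        ∑ r ∈ antidiagonal p.2, (a * q ^ (2 * p.1)) ^ r.1 * q ^ r.1 ^ 2 /
          qPochhammer (a * q ^ (2 * p.1) * q) q r.1 /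
          (qPochhammer q q r.1 * qPochhammer q q r.2) := by
      rw [mul_sum]
      exact sum_congr rfl fun r _ => by ring
    _ = _ := by
      rw [hsum]
      ring

/-- The sequence `α` of the unit Bailey pair relative to `a`; its partner `β` is `1, 0, 0, …`. -/
def unitBailey (a q : K) (n : ℕ) : K :=
  (-1) ^ n * q ^ n.choose 2 * (1 - a * q ^ (2 * n)) / (1 - a) *
    (qPochhammer a q n / qPochhammer q q n)

lemma isBaileyPair_unitBailey (hq : ∀ n, qPochhammer q q n ≠ 0)
    (ha : ∀ n, qPochhammer a q n ≠ 0) :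
    IsBaileyPair a q (unitBailey a q) fun n => if n = 0 then 1 else 0 := by
  have ha1 : 1 - a ≠ 0 := by simpa using one_sub_mul_pow_ne_zero ha 0
  rintro (_ | n)
  · simp [unitBailey, ha1]
  let c (i : ℕ) : K := (-1) ^ i * q ^ i.choose 2 * qPochhammer a q i
  have hc (i : ℕ) : c (i + 1) = -q ^ i * (1 - a * q ^ i) * c i := by
    simp only [c, qPochhammer_succ, Nat.choose_succ_succ' i 1, Nat.choose_one_right]
    ring
  simp only [n.succ_ne_zero, if_false]
  refine (mul_left_cancel₀ (one_sub_pow_succ_ne_zero hq n) ?_).symm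
  -- `1 - q ^ (n + 1)` is split so that the two halves produced by Pascal's rule cancel termwise.
  have hterm (p : ℕ × ℕ) (hp : p ∈ antidiagonal (n + 1)) : (1 - q ^ (n + 1)) *
      (unitBailey a q p.1 / (qPochhammer q q p.2 * qPochhammer (a * q) q (n + 1 + p.1))) =
      ((1 - q ^ p.2) * (q ^ p.1 * (1 - a * q ^ p.1) * c p.1 /
        qPochhammer a q (2 * p.1 + p.2 + 1)) +
      (1 - q ^ p.1) * (c p.1 / qPochhammer a q (2 * p.1 + p.2))) /
        (qPochhammer q q p.1 * qPochhammer q q p.2) := by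
    have hq₁ := hq p.1
    have hq₂ := hq p.2
    have ham := ha (2 * p.1 + p.2)
    have ham1 := one_sub_mul_pow_ne_zero ha (2 * p.1 + p.2)
    have hshift : qPochhammer (a * q) q (2 * p.1 + p.2) =
        qPochhammer a q (2 * p.1 + p.2) * (1 - a * q ^ (2 * p.1 + p.2)) / (1 - a) := by
      rw [← qPochhammer_succ, qPochhammer_succ', mul_div_cancel_left₀ _ ha1]
    simp only [unitBailey, c, ← mem_antidiagonal.1 hp]
    rw [show p.1 + p.2 + p.1 = 2 * p.1 + p.2 by ring, hshift, qPochhammer_succ]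
    field_simp
    ring
  rw [mul_sum, sum_congr rfl hterm, sum_antidiagonal_succ_div_qPochhammer hq
    (fun i j => q ^ i * (1 - a * q ^ i) * c i / qPochhammer a q (2 * i + j + 1))
    (fun i j => c i / qPochhammer a q (2 * i + j)), mul_zero]
  refine sum_eq_zero fun p _ => ?_
  rw [hc, show 2 * (p.1 + 1) + p.2 = 2 * p.1 + (p.2 + 1) + 1 by ring]
  ring

lemma isBaileyPair_inv_qPochhammer (hq : ∀ n, qPochhammer q q n ≠ 0)
    (ha : ∀ n, qPochhammer a q n ≠ 0) :
    IsBaileyPair a q (fun n => a ^ n * q ^ n ^ 2 * unitBailey a q n)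
      fun n => (qPochhammer q q n)⁻¹ := by
  have haq (n : ℕ) : qPochhammer (a * q) q n ≠ 0 := by
    simpa using qPochhammer_mul_pow_ne_zero ha 1 n
  convert! (isBaileyPair_unitBailey hq ha).bailey_lemma hq haq using 2 with n
  rw [Nat.sum_antidiagonal_eq_sum_range_succ_mk, sum_eq_single_of_mem 0 (by simp)] <;>
    simp +contextual

/-- The general term `(-z)ᵏ q ^ (k (k - 1) / 2)` of the theta series in Jacobi's triple product. -/
def jacobiTerm (z q : K) (k : ℤ) : K :=
  (-z) ^ k * q ^ (k * (k - 1) / 2)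

lemma jacobiTerm_natCast (z q : K) (n : ℕ) : jacobiTerm z q n = (-z) ^ n * q ^ n.choose 2 := by
  have hexp : (n * (n - 1) / 2 : ℤ) = (n * (n - 1) / 2 : ℕ) := by cases n <;> simp
  rw [jacobiTerm, hexp, zpow_natCast, zpow_natCast, Nat.choose_two_right]

lemma jacobiTerm_add_one (hz : z ≠ 0) (hq : q ≠ 0) (k : ℤ) :
    jacobiTerm z q (k + 1) = -(z * q ^ k) * jacobiTerm z q k := by
  rw [jacobiTerm, jacobiTerm, show (k + 1) * (k + 1 - 1) = k * (k - 1) + k * 2 by ring,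
    Int.add_mul_ediv_right _ _ two_ne_zero, zpow_add₀ hq, zpow_add_one₀ (neg_ne_zero.2 hz)]
  ring

lemma jacobiTerm_neg (hq : q ≠ 0) (z : K) (k : ℤ) :
    jacobiTerm z q (-k) = jacobiTerm (q / z) q k := by
  rw [jacobiTerm, jacobiTerm, show -k * (-k - 1) = k * (k - 1) + k * 2 by ring,
    Int.add_mul_ediv_right _ _ two_ne_zero, zpow_add₀ hq, zpow_neg, ← inv_zpow, inv_neg,
    div_eq_mul_inv, ← mul_neg, mul_zpow]
  ring

lemma jacobiTerm_neg_add_one (hz : z ≠ 0) (hq : q ≠ 0) (n : ℕ) :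
    jacobiTerm z q (-(n + 1)) = -(q / z) ^ (2 * n + 1) * jacobiTerm z q n := by
  rw [jacobiTerm_neg hq, jacobiTerm_add_one (div_ne_zero hq hz) hq, jacobiTerm_natCast,
    jacobiTerm_natCast, zpow_natCast, neg_pow, neg_pow z,
    ← div_mul_cancel₀ (q ^ n) (pow_ne_zero n hz), ← div_pow]
  ring

/-- The truncation of the series `∑ jacobiTerm z q k` to `-b ≤ k ≤ a`, weighted by
`1 / ((q; q)_{b + k} (q; q)_{a - k})`; the sum runs over the pairs `(b + k, a - k)`. -/
def finiteTheta (z q : K) (a b : ℕ) : K :=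
  ∑ p ∈ antidiagonal (a + b), jacobiTerm z q (p.1 - b) / (qPochhammer q q p.1 * qPochhammer q q p.2)

lemma finiteTheta_comm (hq : q ≠ 0) (a b : ℕ) (z : K) :
    finiteTheta z q a b = finiteTheta (q / z) q b a := by
  rw [finiteTheta, finiteTheta, add_comm b, ← Nat.sum_antidiagonal_swap]
  refine sum_congr rfl fun p hp => ?_
  have hp : (p.2 - b : ℤ) = -(p.1 - a) := by
    have := mem_antidiagonal.1 hp
    omega
  rw [Prod.fst_swap, Prod.snd_swap, hp, jacobiTerm_neg hq, mul_comm (qPochhammer q q p.2)]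

lemma one_sub_pow_mul_finiteTheta_succ (hq : ∀ n, qPochhammer q q n ≠ 0) (hz : z ≠ 0)
    (hq0 : q ≠ 0) (a b : ℕ) : (1 - q ^ (a + b + 1)) * finiteTheta z q (a + 1) b =
      (1 - z * q ^ a) * finiteTheta z q a b := by
  rw [finiteTheta, finiteTheta, add_right_comm a 1 b, one_sub_pow_mul_sum_antidiagonal_succ hq
    (fun i _ => jacobiTerm z q (i - b)), mul_sum]
  refine sum_congr rfl fun p hp => ?_
  have hpow : q ^ a = q ^ p.2 * q ^ (p.1 - b : ℤ) := by
    rw [← zpow_natCast q a, ← zpow_natCast q p.2, ← zpow_add₀ hq0]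
    congr 1
    have := mem_antidiagonal.1 hp
    omega
  rw [Nat.cast_succ, add_sub_right_comm, jacobiTerm_add_one hz hq0, hpow]
  ring

lemma finiteTheta_mul_qPochhammer_eq_mul_finiteTheta_zero (hq : ∀ n, qPochhammer q q n ≠ 0)
    (hz : z ≠ 0) (hq0 : q ≠ 0) (a b : ℕ) : finiteTheta z q a b * qPochhammer q q (a + b) =
      qPochhammer z q a * (finiteTheta z q 0 b * qPochhammer q q b) := by
  induction a with
  | zero => simp
  | succ a ih =>
    have hstep := one_sub_pow_mul_finiteTheta_succ hq hz hq0 a b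
    rw [add_right_comm a 1 b, qPochhammer_succ, qPochhammer_succ, ← pow_succ']
    linear_combination qPochhammer q q (a + b) * hstep + (1 - z * q ^ a) * ih

theorem finite_jacobi_triple_product (hq : ∀ n, qPochhammer q q n ≠ 0) (hz : z ≠ 0) (hq0 : q ≠ 0)
    (a b : ℕ) : finiteTheta z q a b * qPochhammer q q (a + b) =
      qPochhammer z q a * qPochhammer (q / z) q b := by
  have hb := finiteTheta_mul_qPochhammer_eq_mul_finiteTheta_zero hq (div_ne_zero hq0 hz) hq0 b 0
  rw [add_zero] at hb
  rw [finiteTheta_mul_qPochhammer_eq_mul_finiteTheta_zero hq hz hq0, finiteTheta_comm hq0, hb]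
  simp [finiteTheta, jacobiTerm]

end Finite

section Tannery

variable {𝕜 : Type*} [NormedRing 𝕜]

lemma tendsto_sum_mul_of_norm_le [CompleteSpace 𝕜] {ι : Type*} {s : ℕ → Finset ι}
    (hs : Tendsto s atTop atTop) {c : ι → 𝕜} (hc : Summable fun k => ‖c k‖) {w : ℕ → ι → 𝕜}
    {W : 𝕜} {B : ℝ} (hw : ∀ k, Tendsto (w · k) atTop (𝓝 W))
    (hB : ∀ n, ∀ k ∈ s n, ‖w n k‖ ≤ B) :
    Tendsto (fun n => ∑ k ∈ s n, c k * w n k) atTop (𝓝 ((∑' k, c k) * W)) := by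
  have hmem (k : ι) : ∀ᶠ n in atTop, k ∈ s n :=
    (hs.eventually_ge_atTop {k}).mono fun n hn => hn (mem_singleton_self k)
  rw [← hc.of_norm.tsum_mul_right W]
  simp_rw [sum_eq_tsum_indicator (L := .unconditional ι)]
  refine tendsto_tsum_of_dominated_convergence (bound := fun k => ‖c k‖ * |B|)
    (hc.mul_right _) (fun k => ?_) (.of_forall fun n k => ?_)
  · refine ((hw k).const_mul (c k)).congr' ?_
    filter_upwards [hmem k] with n hn
    rw [Set.indicator_of_mem (mem_coe.2 hn)]
  · by_cases hk : k ∈ s n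
    · rw [Set.indicator_of_mem (mem_coe.2 hk)]
      exact norm_mul_le_of_le le_rfl ((hB n k hk).trans (le_abs_self B))
    · rw [Set.indicator_of_notMem (by simpa using hk), norm_zero]
      positivity

lemma exists_norm_mul_le {u v : ℕ → 𝕜} {U V : 𝕜} (hu : Tendsto u atTop (𝓝 U))
    (hv : Tendsto v atTop (𝓝 V)) : ∃ B, ∀ i j, ‖u i * v j‖ ≤ B := by
  obtain ⟨A, hA⟩ := hu.norm.bddAbove_range
  obtain ⟨B, hB⟩ := hv.norm.bddAbove_range
  exact ⟨A * B, fun i j => norm_mul_le_of_le (hA ⟨i, rfl⟩) (hB ⟨j, rfl⟩)⟩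

lemma tendsto_sum_antidiagonal_mul [CompleteSpace 𝕜] {c u v : ℕ → 𝕜} {U V : 𝕜}
    (hc : Summable fun k => ‖c k‖) (hu : Tendsto u atTop (𝓝 U)) (hv : Tendsto v atTop (𝓝 V)) :
    Tendsto (fun n => ∑ p ∈ antidiagonal n, c p.1 * (u p.2 * v (n + p.1))) atTop
      (𝓝 ((∑' k, c k) * (U * V))) := by
  obtain ⟨B, hB⟩ := exists_norm_mul_le hu hv
  simp only [fun n => Nat.sum_antidiagonal_eq_sum_range_succ_mk
    (fun p : ℕ × ℕ => c p.1 * (u p.2 * v (n + p.1))) n]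
  exact tendsto_sum_mul_of_norm_le (tendsto_finset_range.comp (tendsto_add_atTop_nat 1)) hc
    (fun k => (hu.comp (tendsto_sub_atTop_nat k)).mul (hv.comp (tendsto_add_atTop_nat k)))
    fun n k _ => hB _ _

lemma sum_antidiagonal_add_self_eq_sum_Icc {M : Type*} [AddCommMonoid M] (f : ℕ → ℕ → ℤ → M)
    (n : ℕ) : ∑ p ∈ antidiagonal (n + n), f p.1 p.2 (p.1 - n) =
      ∑ k ∈ Icc (-n : ℤ) n, f (n + k).toNat (n - k).toNat k := by
  refine sum_nbij' (fun p => (p.1 - n : ℤ)) (fun k => ((n + k).toNat, (n - k).toNat)) ?_ ?_ ?_ ?_ ?_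
    <;> simp only [HasAntidiagonal.mem_antidiagonal, mem_Icc, Prod.forall, Prod.mk.injEq]
  · omega
  · omega
  · omega
  · omega
  · intro i j h
    congr <;> omega

lemma tendsto_sum_antidiagonal_add_self_mul [CompleteSpace 𝕜] {c : ℤ → 𝕜} {u v : ℕ → 𝕜} {U V : 𝕜}
    (hc : Summable fun k => ‖c k‖) (hu : Tendsto u atTop (𝓝 U)) (hv : Tendsto v atTop (𝓝 V)) :
    Tendsto (fun n : ℕ => ∑ p ∈ antidiagonal (n + n), c (p.1 - n) * (u p.1 * v p.2)) atTop
      (𝓝 ((∑' k, c k) * (U * V))) := by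
  obtain ⟨B, hB⟩ := exists_norm_mul_le hu hv
  simp only [sum_antidiagonal_add_self_eq_sum_Icc fun i j k => c k * (u i * v j)]
  exact tendsto_sum_mul_of_norm_le tendsto_Icc_neg hc (fun k =>
    (hu.comp <| tendsto_atTop_mono (fun n => by omega) (tendsto_sub_atTop_nat k.natAbs)).mul
      (hv.comp <| tendsto_atTop_mono (fun n => by omega) (tendsto_sub_atTop_nat k.natAbs)))
    fun n k _ => hB _ _

end Tannery

section Infinite

variable {𝕜 : Type*} [NormedField 𝕜]

/-- The infinite product `(a; q)_∞ = ∏_{i ≥ 0} (1 - a qⁱ)`, meaningful for `‖q‖ < 1`. -/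
noncomputable def qPochhammerInf (a q : 𝕜) : 𝕜 :=
  ∏' i : ℕ, (1 - a * q ^ i)

variable {a q z : 𝕜}

lemma one_sub_ne_zero_of_norm_lt_one (hq : ‖q‖ < 1) : 1 - q ≠ 0 := by
  rw [sub_ne_zero]
  rintro rfl
  simp at hq

lemma norm_pow_lt_one (hq : ‖q‖ < 1) {d : ℕ} (hd : d ≠ 0) : ‖q ^ d‖ < 1 := by
  simpa using pow_lt_one₀ (norm_nonneg q) hq hd

lemma qPochhammer_ne_zero (hq : ‖q‖ < 1) (ha : ‖a‖ < 1) (n : ℕ) : qPochhammer a q n ≠ 0 := by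
  refine prod_ne_zero_iff.2 fun i _ => one_sub_ne_zero_of_norm_lt_one ?_
  rw [norm_mul, norm_pow]
  exact (mul_le_of_le_one_right (norm_nonneg a) (pow_le_one₀ (norm_nonneg q) hq.le)).trans_lt ha

lemma one_sub_mul_unitBailey_self (hq : ‖q‖ < 1) (n : ℕ) :
    (1 - q) * unitBailey q q n = (-1) ^ n * q ^ n.choose 2 * (1 - q ^ (2 * n + 1)) := by
  have hq1 := one_sub_ne_zero_of_norm_lt_one hq
  rw [unitBailey, div_self (qPochhammer_ne_zero hq hq n)]
  field_simp
  ring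

lemma sq_eq_two_mul_choose_two_add (n : ℕ) : n ^ 2 = 2 * n.choose 2 + n := by
  induction n with
  | zero => rfl
  | succ n ih =>
    rw [Nat.choose_succ_succ' n 1, Nat.choose_one_right]
    linarith

lemma summable_norm_neg_mul_pow (hq : ‖q‖ < 1) (a : 𝕜) : Summable fun i : ℕ => ‖-(a * q ^ i)‖ := by
  simpa using (summable_geometric_of_lt_one (norm_nonneg q) hq).mul_left ‖a‖

lemma summable_norm_pow_mul_pow_choose_two (hq : ‖q‖ < 1) (z : 𝕜) :
    Summable fun n : ℕ => ‖z ^ n * q ^ n.choose 2‖ := by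
  have hlim : Tendsto (fun n : ℕ => ‖z * q ^ n‖) atTop (𝓝 0) := by
    simpa using ((tendsto_pow_atTop_nhds_zero_of_norm_lt_one hq).const_mul z).norm
  refine summable_of_ratio_norm_eventually_le (r := 1 / 2) (by norm_num) ?_
  filter_upwards [hlim.eventually_le_const (by norm_num : (0 : ℝ) < 1 / 2)] with n hn
  rw [norm_norm, norm_norm, pow_succ', Nat.choose_succ_succ' n 1, Nat.choose_one_right, pow_add,
    mul_mul_mul_comm, norm_mul]
  gcongr

lemma summable_norm_mul_of_tendsto {c u : ℕ → 𝕜} {U : 𝕜} (hc : Summable fun n => ‖c n‖)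
    (hu : Tendsto u atTop (𝓝 U)) : Summable fun n => ‖c n * u n‖ := by
  simp only [norm_mul]
  exact (by simpa using hc : Summable fun n => ‖‖c n‖‖).mul_tendsto_const
    (Nat.cofinite_eq_atTop ▸ hu.norm)

lemma summable_norm_jacobiTerm (hq : ‖q‖ < 1) (hq0 : q ≠ 0) (z : 𝕜) :
    Summable fun k => ‖jacobiTerm z q k‖ := by
  refine .of_nat_of_neg ?_ ?_
  · simpa only [jacobiTerm_natCast] using summable_norm_pow_mul_pow_choose_two hq (-z)
  · simpa only [jacobiTerm_neg hq0, jacobiTerm_natCast] using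
      summable_norm_pow_mul_pow_choose_two hq (-(q / z))

variable [CompleteSpace 𝕜]

lemma multipliable_one_sub_mul_pow (hq : ‖q‖ < 1) (a : 𝕜) :
    Multipliable fun i : ℕ => 1 - a * q ^ i := by
  simpa only [sub_eq_add_neg] using
    multipliable_one_add_of_summable (summable_norm_neg_mul_pow hq a)

lemma tendsto_qPochhammer (hq : ‖q‖ < 1) (a : 𝕜) :
    Tendsto (qPochhammer a q) atTop (𝓝 (qPochhammerInf a q)) :=
  (multipliable_one_sub_mul_pow hq a).tendsto_prod_tprod_nat

lemma qPochhammerInf_ne_zero (hq : ‖q‖ < 1) (ha : ∀ n, qPochhammer a q n ≠ 0) :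
    qPochhammerInf a q ≠ 0 := by
  have hfactor (i : ℕ) : 1 + -(a * q ^ i) ≠ 0 := by
    simpa only [sub_eq_add_neg] using one_sub_mul_pow_ne_zero ha i
  simpa only [qPochhammerInf, sub_eq_add_neg] using
    tprod_one_add_ne_zero_of_summable hfactor (summable_norm_neg_mul_pow hq a)

lemma qPochhammerInf_pow_ne_zero (hq : ‖q‖ < 1) {r d : ℕ} (hr : r ≠ 0) (hd : d ≠ 0) :
    qPochhammerInf (q ^ r) (q ^ d) ≠ 0 :=
  have hqd := norm_pow_lt_one hq hd
  qPochhammerInf_ne_zero hqd (qPochhammer_ne_zero hqd (norm_pow_lt_one hq hr))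

lemma qPochhammerInf_eq_mul (hq : ‖q‖ < 1) (a : 𝕜) :
    qPochhammerInf a q = (1 - a) * qPochhammerInf (a * q) q := by
  refine tendsto_nhds_unique ((tendsto_add_atTop_iff_nat 1).2 (tendsto_qPochhammer hq a)) ?_
  simpa only [qPochhammer_succ'] using (tendsto_qPochhammer hq (a * q)).const_mul (1 - a)

lemma qPochhammerInf_eq_prod (hq : ‖q‖ < 1) (a : 𝕜) {d : ℕ} (hd : d ≠ 0) :
    qPochhammerInf a q = ∏ r ∈ range d, qPochhammerInf (a * q ^ r) (q ^ d) := by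
  have hqd := norm_pow_lt_one hq hd
  refine tendsto_nhds_unique ((tendsto_qPochhammer hq a).comp
    (tendsto_id.const_mul_atTop' hd.bot_lt)) ?_
  simpa only [Function.comp_def, id, qPochhammer_mul] using
    tendsto_finsetProd (range d) fun r _ => tendsto_qPochhammer hqd (a * q ^ r)

theorem jacobi_triple_product (hq : ‖q‖ < 1) (hq0 : q ≠ 0) (hz : z ≠ 0) :
    ∑' k, jacobiTerm z q k =
      qPochhammerInf q q * qPochhammerInf z q * qPochhammerInf (q / z) q := by
  have hqq := qPochhammer_ne_zero hq hq
  have hP := qPochhammerInf_ne_zero hq hqq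
  have htend (a : 𝕜) := tendsto_qPochhammer hq a
  have hinv := (htend q).inv₀ hP
  have hsum := tendsto_sum_antidiagonal_add_self_mul (summable_norm_jacobiTerm hq hq0 z) hinv hinv
  have hprod := ((htend z).mul (htend (q / z))).div
    ((htend q).comp (tendsto_id.atTop_add_atTop tendsto_id)) hP
  have heq := tendsto_nhds_unique hsum <| hprod.congr fun n => by
    change qPochhammer z q n * qPochhammer (q / z) q n / qPochhammer q q (n + n) = _
    rw [div_eq_iff (hqq _), ← finite_jacobi_triple_product hqq hz hq0, finiteTheta]
    simp [div_eq_mul_inv, mul_comm]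
  field_simp at heq
  exact heq

lemma tsum_jacobiTerm_eq_tsum_nat (hq : ‖q‖ < 1) (hq0 : q ≠ 0) (hz : z ≠ 0) :
    ∑' k, jacobiTerm z q k =
      ∑' n : ℕ, (-z) ^ n * q ^ n.choose 2 * (1 - (q / z) ^ (2 * n + 1)) := by
  have hsum := (summable_norm_jacobiTerm hq hq0 z).of_norm
  have hpos : Summable fun n : ℕ => jacobiTerm z q n := hsum.comp_injective Nat.cast_injective
  have hneg : Summable fun n : ℕ => jacobiTerm z q (-(n + 1)) :=
    hsum.comp_injective fun m n h => by simpa using h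
  rw [tsum_of_nat_of_neg_add_one hpos hneg, ← hpos.tsum_add hneg]
  simp only [jacobiTerm_neg_add_one hz hq0, jacobiTerm_natCast]
  exact tsum_congr fun n => by ring

theorem IsBaileyPair.tsum_eq {α β : ℕ → 𝕜} (h : IsBaileyPair a q α β) (hq : ‖q‖ < 1)
    (ha : ∀ n, qPochhammer (a * q) q n ≠ 0) (hα : Summable fun n => ‖a ^ n * q ^ n ^ 2 * α n‖)
    (hβ : Summable fun n => ‖a ^ n * q ^ n ^ 2 * β n‖) :
    qPochhammerInf (a * q) q * ∑' n, a ^ n * q ^ n ^ 2 * β n = ∑' n, a ^ n * q ^ n ^ 2 * α n := by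
  have hqq := qPochhammer_ne_zero hq hq
  have hP := qPochhammerInf_ne_zero hq hqq
  have hPa := qPochhammerInf_ne_zero hq ha
  have hinv := (tendsto_qPochhammer hq q).inv₀ hP
  have hleft := tendsto_sum_antidiagonal_mul hβ hinv tendsto_const_nhds (V := 1)
  have hright := tendsto_sum_antidiagonal_mul hα hinv ((tendsto_qPochhammer hq (a * q)).inv₀ hPa)
  have heq := tendsto_nhds_unique hleft <| hright.congr fun n => by
    simpa [div_eq_mul_inv, mul_comm] using (h.bailey_lemma hqq ha n).symm
  field_simp at heq
  rw [mul_comm, heq]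

lemma summable_norm_unitBailey (hq : ‖q‖ < 1) (a : 𝕜) :
    Summable fun n => ‖a ^ n * q ^ n ^ 2 * (a ^ n * q ^ n ^ 2 * unitBailey a q n)‖ := by
  have hpow : Tendsto (fun n => q ^ (2 * n)) atTop (𝓝 0) :=
    (tendsto_pow_atTop_nhds_zero_of_norm_lt_one hq).comp (tendsto_id.const_mul_atTop' two_pos)
  have htend := (((hpow.const_mul a).const_sub 1).div_const (1 - a)).mul
    ((tendsto_qPochhammer hq a).div (tendsto_qPochhammer hq q)
      (qPochhammerInf_ne_zero hq (qPochhammer_ne_zero hq hq)))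
  -- The exponent of `q` is `2 * n ^ 2 + n.choose 2 = 5 * n.choose 2 + 2 * n`.
  have hsum := summable_norm_pow_mul_pow_choose_two
    (norm_pow_lt_one hq (by simp : 5 ≠ 0)) (-(a * q) ^ 2)
  refine (summable_norm_mul_of_tendsto hsum htend).congr fun n => ?_
  simp only [unitBailey, sq_eq_two_mul_choose_two_add, Pi.div_apply]
  ring_nf

theorem rogers_identity (hq : ‖q‖ < 1) (ha : ∀ n, qPochhammer a q n ≠ 0) :
    qPochhammerInf (a * q) q * ∑' n, a ^ n * q ^ n ^ 2 * (qPochhammer q q n)⁻¹ =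
      ∑' n, a ^ n * q ^ n ^ 2 * (a ^ n * q ^ n ^ 2 * unitBailey a q n) := by
  have hqq := qPochhammer_ne_zero hq hq
  have haq (n : ℕ) : qPochhammer (a * q) q n ≠ 0 := by
    simpa using qPochhammer_mul_pow_ne_zero ha 1 n
  refine (isBaileyPair_inv_qPochhammer hqq ha).tsum_eq hq haq (summable_norm_unitBailey hq a) ?_
  have hsum := summable_norm_pow_mul_pow_choose_two (norm_pow_lt_one hq two_ne_zero) (a * q)
  have hinv := (tendsto_qPochhammer hq q).inv₀ (qPochhammerInf_ne_zero hq hqq)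
  refine (summable_norm_mul_of_tendsto hsum hinv).congr fun n => ?_
  rw [sq_eq_two_mul_choose_two_add]
  ring_nf

lemma qPochhammerInf_mul_tsum_pow_div_qPochhammer (hq : ‖q‖ < 1) (hq0 : q ≠ 0) :
    qPochhammerInf q q * ∑' n : ℕ, q ^ (n ^ 2 + n) / qPochhammer q q n =
      ∑' k, jacobiTerm (q ^ 4) (q ^ 5) k := by
  have hbase : q ^ 5 / q ^ 4 = q := by field_simp
  rw [tsum_jacobiTerm_eq_tsum_nat (norm_pow_lt_one hq (by simp : 5 ≠ 0)) (pow_ne_zero 5 hq0)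
    (pow_ne_zero 4 hq0), hbase, qPochhammerInf_eq_mul hq, mul_assoc]
  calc
    _ = (1 - q) * (qPochhammerInf (q * q) q *
          ∑' n, q ^ n * q ^ n ^ 2 * (qPochhammer q q n)⁻¹) := by
      simp only [pow_add, mul_comm (q ^ _ ^ 2), div_eq_mul_inv]
    _ = ∑' n, q ^ n * q ^ n ^ 2 * (q ^ n * q ^ n ^ 2 * ((1 - q) * unitBailey q q n)) := by
      rw [rogers_identity hq (qPochhammer_ne_zero hq hq), ← tsum_mul_left]
      exact tsum_congr fun n => by ring
    _ = _ := tsum_congr fun n => by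
      rw [one_sub_mul_unitBailey_self hq, sq_eq_two_mul_choose_two_add]
      ring

lemma tprod_inv_one_sub_pow_mul_one_sub_pow (hq : ‖q‖ < 1) {d r s : ℕ} (hd : d ≠ 0) (hr : r ≠ 0)
    (hs : s ≠ 0) :
    ∏' n : ℕ, ((1 - q ^ (d * n + r)) * (1 - q ^ (d * n + s)))⁻¹ =
      (qPochhammerInf (q ^ r) (q ^ d) * qPochhammerInf (q ^ s) (q ^ d))⁻¹ := by
  have hqd := norm_pow_lt_one hq hd
  have hmul (a : 𝕜) := multipliable_one_sub_mul_pow hqd a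
  have hprod : qPochhammerInf (q ^ r) (q ^ d) * qPochhammerInf (q ^ s) (q ^ d) =
      ∏' n : ℕ, (1 - q ^ r * (q ^ d) ^ n) * (1 - q ^ s * (q ^ d) ^ n) :=
    ((hmul _).tprod_mul (hmul _)).symm
  rw [hprod, ← ((hmul _).mul (hmul _)).tprod_inv₀ (hprod ▸ mul_ne_zero
    (qPochhammerInf_pow_ne_zero hq hr hd) (qPochhammerInf_pow_ne_zero hq hs hd))]
  exact tprod_congr fun n => by ring

lemma tsum_pow_sq_add_self_div_qPochhammer (hq : ‖q‖ < 1) (hq0 : q ≠ 0) :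
    ∑' n : ℕ, q ^ (n ^ 2 + n) / qPochhammer q q n =
      (qPochhammerInf (q ^ 2) (q ^ 5) * qPochhammerInf (q ^ 3) (q ^ 5))⁻¹ := by
  have htheta := qPochhammerInf_mul_tsum_pow_div_qPochhammer hq hq0
  rw [jacobi_triple_product (norm_pow_lt_one hq (by simp : 5 ≠ 0)) (pow_ne_zero 5 hq0)
    (pow_ne_zero 4 hq0), show q ^ 5 / q ^ 4 = q by field_simp] at htheta
  have hclasses : qPochhammerInf q q = ∏ r ∈ range 5, qPochhammerInf (q ^ (r + 1)) (q ^ 5) := by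
    simpa only [pow_succ'] using qPochhammerInf_eq_prod hq q (by simp : 5 ≠ 0)
  simp only [prod_range_succ, prod_range_zero, zero_add, pow_one, one_mul, Nat.reduceAdd]
    at hclasses
  have hne (r : ℕ) : qPochhammerInf (q ^ (r + 1)) (q ^ 5) ≠ 0 :=
    qPochhammerInf_pow_ne_zero hq r.succ_ne_zero (by simp)
  rw [hclasses] at htheta
  refine eq_inv_of_mul_eq_one_left
    (mul_left_cancel₀ (mul_ne_zero (mul_ne_zero (hne 0) (hne 3)) (hne 4)) ?_)
  simp only [zero_add, pow_one, Nat.reduceAdd]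
  linear_combination htheta

theorem rogers_ramanujan_second_general (q : 𝕜) (hq : ‖q‖ < 1) :
    ∏' n : ℕ, ((1 - q ^ (5 * n + 2)) * (1 - q ^ (5 * n + 3)))⁻¹
      = ∑' n : ℕ, q ^ (n ^ 2 + n) / ∏ j ∈ range n, (1 - q ^ (j + 1)) := by
  have hden (n : ℕ) : ∏ j ∈ range n, (1 - q ^ (j + 1)) = qPochhammer q q n :=
    prod_congr rfl fun j _ => by rw [pow_succ']
  simp only [hden]
  obtain rfl | hq0 := eq_or_ne q 0
  · rw [tsum_eq_single 0 fun n hn => by simp [hn]]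
    simp
  · rw [tprod_inv_one_sub_pow_mul_one_sub_pow hq (by simp) two_ne_zero three_ne_zero,
      tsum_pow_sq_add_self_div_qPochhammer hq hq0]

end Infinite

/-- The second Rogers–Ramanujan identity:
`∏_{n≥0} 1/((1-q^{5n+2})(1-q^{5n+3})) = ∑_{n≥0} q^{n²+n}/((1-q)⋯(1-qⁿ))`
for `|q| < 1`. -/
theorem rogers_ramanujan_second (q : ℂ) (hq : ‖q‖ < 1) :
    ∏' n : ℕ, ((1 - q ^ (5 * n + 2)) * (1 - q ^ (5 * n + 3)))⁻¹
      = ∑' n : ℕ, q ^ (n ^ 2 + n) / ∏ j ∈ Finset.range n, (1 - q ^ (j + 1)) :=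
  rogers_ramanujan_second_general q hq
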